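/- arXiv:1503.07129 — 9 statements merged into one kernel-verified Lean document; each statement's English description precedes it below -/
import Mathlib

section
/- Let m ∈ ℕ, m ≥ 1, and let λ ∈ ℝ satisfy (m−1)/m < λ ≤ m/(m+1). Then the set of fixed points of f_λ is exactly {0, −1, −2, …, −m}; that is, for every x ∈ ℝ, ⌊λx⌋ = x if and only if x is an integer with −m ≤ x ≤ 0. -/
/-- For (m-1)/m < λ ≤ m/(m+1), the fixed points of f_λ(x) = ⌊λx⌋ are exactly
the integers 0, -1, ..., -m. -/
theorem floor_lambda_fixed_points_lt_one (m : ℕ) (hm : 1 ≤ m) (lam : ℝ)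
    (h1 : ((m : ℝ) - 1) / m < lam) (h2 : lam ≤ (m : ℝ) / (m + 1)) :
    ∀ x : ℝ, (⌊lam * x⌋ : ℝ) = x ↔ ∃ k : ℤ, x = (k : ℝ) ∧ -(m : ℤ) ≤ k ∧ k ≤ 0 := by
  have hm' : (1 : ℝ) ≤ m := by exact_mod_cast hm
  rw [div_lt_iff₀ (by linarith)] at h1
  rw [le_div_iff₀ (by linarith)] at h2
  have hd : 0 < 1 - lam := by
    by_contra hc
    push Not at hc
    nlinarith
  intro x
  constructor
  · intro hx
    refine ⟨⌊lam * x⌋, hx.symm, ?_, ?_⟩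
    · by_contra hc
      have hk : ⌊lam * x⌋ + (m : ℤ) + 1 ≤ 0 := by omega
      have hk' : x + (m : ℝ) + 1 ≤ 0 := by
        rw [← hx]; exact_mod_cast hk
      have h3 := Int.lt_floor_add_one (lam * x)
      rw [hx] at h3
      nlinarith [mul_nonneg hd.le (neg_nonneg.mpr hk')]
    · have h3 := Int.floor_le (lam * x)
      rw [hx] at h3
      have h4 : x ≤ 0 := by
        by_contra hc
        push Not at hc
        nlinarith [mul_pos hd hc]
      rw [← hx] at h4
      exact_mod_cast h4
  · rintro ⟨k, rfl, hk1, hk2⟩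
    have hk1' : -(m : ℝ) ≤ k := by exact_mod_cast hk1
    have hk2' : (k : ℝ) ≤ 0 := by exact_mod_cast hk2
    have : ⌊lam * (k : ℝ)⌋ = k := by
      rw [Int.floor_eq_iff]
      constructor
      · nlinarith [mul_nonneg hd.le (neg_nonneg.mpr hk2')]
      · nlinarith [mul_nonneg hd.le (sub_nonneg.mpr hk1')]
    rw [this]
end

section
/- Let m ∈ ℕ, m ≥ 2, and let λ ∈ ℝ satisfy (m+1)/m ≤ λ < m/(m−1). Then the set of fixed points of f_λ is exactly {0, 1, 2, …, m−1}; that is, for every x ∈ ℝ, ⌊λx⌋ = x if and only if x is an integer with 0 ≤ x ≤ m−1. -/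
/-- For m ≥ 2 and (m+1)/m ≤ λ < m/(m-1), the fixed points of f_λ(x) = ⌊λx⌋
are exactly the integers 0, 1, ..., m-1. -/
theorem floor_lambda_fixed_points_gt_one (m : ℕ) (hm : 2 ≤ m) (lam : ℝ)
    (h1 : ((m : ℝ) + 1) / m ≤ lam) (h2 : lam < (m : ℝ) / ((m : ℝ) - 1)) :
    ∀ x : ℝ, (⌊lam * x⌋ : ℝ) = x ↔ ∃ k : ℤ, x = (k : ℝ) ∧ 0 ≤ k ∧ k ≤ (m : ℤ) - 1 := by
  have hm' : (2 : ℝ) ≤ m := by exact_mod_cast hm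
  rw [div_le_iff₀ (by linarith)] at h1
  rw [lt_div_iff₀ (by linarith)] at h2
  have hl : 0 < lam - 1 := by
    by_contra h
    nlinarith
  intro x
  constructor
  · intro h
    have a := Int.floor_le (lam * x)
    have b := Int.lt_floor_add_one (lam * x)
    rw [h] at a b
    have hx0 : 0 ≤ x := by
      by_contra hx
      nlinarith
    have hxm : x < m := by
      by_contra hx
      nlinarith
    refine ⟨⌊lam * x⌋, h.symm, ?_, ?_⟩
    · rw [← h] at hx0
      exact_mod_cast hx0
    · rw [← h] at hxm
      have : ⌊lam * x⌋ < (m : ℤ) := by exact_mod_cast hxm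
      omega
  · rintro ⟨k, rfl, h0, hk⟩
    have h0' : (0 : ℝ) ≤ k := by exact_mod_cast h0
    have hk' : (k : ℝ) ≤ m - 1 := by exact_mod_cast hk
    have : ⌊lam * (k : ℝ)⌋ = k := by
      rw [Int.floor_eq_iff]
      constructor <;> nlinarith
    rw [this]
end

section
/- Let λ ∈ ℝ with −1 < λ < 0. Then for every x ∈ ℝ, the sequence of iterates f_λⁿ(x) converges to 0 as n → ∞. -/
open Filter

lemma floor_neg_step (lam : ℝ) (h1 : -1 < lam) (h2 : lam < 0) (m : ℤ) (hm : m < 0) :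
    0 ≤ ⌊lam * (m : ℝ)⌋ ∧ ⌊lam * (m : ℝ)⌋ < -m := by
  have hm' : (m : ℝ) < 0 := by exact_mod_cast hm
  constructor
  · apply Int.floor_nonneg.2
    nlinarith
  · rw [Int.floor_lt]
    push_cast
    nlinarith

lemma floor_pos_step (lam : ℝ) (h1 : -1 < lam) (h2 : lam < 0) (m : ℤ) (hm : 0 < m) :
    ⌊lam * (m : ℝ)⌋ < 0 ∧ -m ≤ ⌊lam * (m : ℝ)⌋ := by
  have hm' : (0 : ℝ) < m := by exact_mod_cast hm
  constructor
  · rw [Int.floor_lt]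
    push_cast
    nlinarith
  · rw [Int.le_floor]
    push_cast
    nlinarith

lemma nonneg_reaches_zero (lam : ℝ) (h1 : -1 < lam) (h2 : lam < 0) (N : ℕ) :
    ∀ m : ℤ, 0 ≤ m → m ≤ N →
      ∃ n : ℕ, (fun y : ℝ => (⌊lam * y⌋ : ℝ))^[n] (m : ℝ) = 0 := by
  induction N with
  | zero =>
    intro m h0 hN
    have : m = 0 := by simp at hN; omega
    exact ⟨0, by simp [this]⟩
  | succ N ih =>
    intro m h0 hN
    rcases h0.eq_or_lt with h | h
    · exact ⟨0, by simp [← h]⟩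
    · obtain ⟨a, b⟩ := floor_pos_step lam h1 h2 m h
      obtain ⟨c, d⟩ := floor_neg_step lam h1 h2 _ a
      obtain ⟨n, hn⟩ := ih _ c (by push_cast at hN; omega)
      exact ⟨n + 2, by simpa [Function.iterate_succ_apply] using hn⟩

/-- For -1 < λ < 0, the iterates of f_λ(x) = ⌊λx⌋ converge to 0 for every x. -/
theorem floor_lambda_iterates_tendsto_zero (lam : ℝ) (h1 : -1 < lam) (h2 : lam < 0) :
    ∀ x : ℝ, Tendsto (fun n : ℕ => (fun y : ℝ => (⌊lam * y⌋ : ℝ))^[n] x) atTop (nhds 0) := by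
  intro x
  have key : ∃ n : ℕ, (fun y : ℝ => (⌊lam * y⌋ : ℝ))^[n] x = 0 := by
    rcases le_or_gt 0 ⌊lam * x⌋ with h | h
    · obtain ⟨n, hn⟩ := nonneg_reaches_zero lam h1 h2 _ _ h (Int.self_le_toNat _)
      exact ⟨n + 1, by simpa [Function.iterate_succ_apply] using hn⟩
    · obtain ⟨c, d⟩ := floor_neg_step lam h1 h2 _ h
      obtain ⟨n, hn⟩ := nonneg_reaches_zero lam h1 h2 _ _ c (Int.self_le_toNat _)
      exact ⟨n + 2, by simpa [Function.iterate_succ_apply] using hn⟩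
  obtain ⟨n, hn⟩ := key
  apply tendsto_const_nhds.congr'
  filter_upwards [eventually_ge_atTop n] with k hk
  obtain ⟨j, rfl⟩ := Nat.exists_eq_add_of_le' hk
  rw [Function.iterate_add_apply, hn, Function.iterate_fixed]
  simp
end

section
/- Let λ ∈ ℝ with λ < −1 and let x ∈ ℝ with x > 0. Then the even iterates diverge to +∞ and the odd iterates diverge to −∞: f_λ^{2k}(x) → +∞ and f_λ^{2k+1}(x) → −∞ as k → ∞. -/
open Filter

/-- For λ < -1 and x > 0, the even iterates of f_λ(x) = ⌊λx⌋ tend to +∞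
and the odd iterates tend to -∞. -/
theorem floor_lambda_lt_neg_one_pos_orbit (lam : ℝ) (hlam : lam < -1)
    (x : ℝ) (hx : 0 < x) :
    Tendsto (fun k : ℕ => (fun y : ℝ => (⌊lam * y⌋ : ℝ))^[2 * k] x) atTop atTop ∧
    Tendsto (fun k : ℕ => (fun y : ℝ => (⌊lam * y⌋ : ℝ))^[2 * k + 1] x) atTop atBot := by
  set f : ℝ → ℝ := fun y : ℝ => (⌊lam * y⌋ : ℝ) with hf
  have up : ∀ (m : ℕ) (y : ℝ), y ≤ -(m : ℝ) → (m : ℝ) ≤ f y := by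
    intro m y hy
    have h0 : (0 : ℝ) ≤ m := Nat.cast_nonneg m
    have h : (m : ℤ) ≤ ⌊lam * y⌋ := by
      rw [Int.le_floor]
      push_cast
      nlinarith
    simp only [hf]
    exact_mod_cast h
  have down : ∀ (m : ℕ) (y : ℝ), 0 < y → (m : ℝ) ≤ y → f y ≤ -((m : ℝ) + 1) := by
    intro m y h0 hy
    have h : ⌊lam * y⌋ < -(m : ℤ) := by
      rw [Int.floor_lt]
      push_cast
      nlinarith
    have h2 : ⌊lam * y⌋ ≤ -((m : ℤ) + 1) := by omega
    simp only [hf]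
    exact_mod_cast h2
  have even : ∀ k : ℕ, 0 < f^[2 * k] x ∧ (k : ℝ) ≤ f^[2 * k] x := by
    intro k
    induction k with
    | zero => simpa using ⟨hx, hx.le⟩
    | succ k ih =>
      have h1 := down k _ ih.1 ih.2
      have h2 := up (k + 1) (f (f^[2 * k] x)) (by push_cast; exact h1)
      have e : f^[2 * (k + 1)] x = f (f (f^[2 * k] x)) := by
        rw [show 2 * (k + 1) = 2 * k + 1 + 1 by ring, Function.iterate_succ_apply',
          Function.iterate_succ_apply']
      rw [e]
      refine ⟨lt_of_lt_of_le ?_ h2, h2⟩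
      positivity
  constructor
  · exact tendsto_atTop_mono (fun k => (even k).2) tendsto_natCast_atTop_atTop
  · refine tendsto_atBot_mono (f := fun k : ℕ => -(k : ℝ)) (fun k => ?_)
      (tendsto_neg_atTop_atBot.comp tendsto_natCast_atTop_atTop)
    rw [Function.iterate_succ_apply']
    have := down k _ (even k).1 (even k).2
    linarith
end

section
/- Let λ ∈ ℝ with λ < −1 and let x ∈ ℝ with x ≤ 1/λ. Then the even iterates diverge to −∞ and the odd iterates diverge to +∞: f_λ^{2k}(x) → −∞ and f_λ^{2k+1}(x) → +∞ as k → ∞. -/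
open Filter

/-- For λ < -1 and x ≤ 1/λ, the even iterates of f_λ(x) = ⌊λx⌋ tend to -∞
and the odd iterates tend to +∞. -/
theorem floor_lambda_lt_neg_one_neg_orbit (lam : ℝ) (hlam : lam < -1)
    (x : ℝ) (hx : x ≤ 1 / lam) :
    Tendsto (fun k : ℕ => (fun y : ℝ => (⌊lam * y⌋ : ℝ))^[2 * k] x) atTop atBot ∧
    Tendsto (fun k : ℕ => (fun y : ℝ => (⌊lam * y⌋ : ℝ))^[2 * k + 1] x) atTop atTop := by
  set f : ℝ → ℝ := fun y : ℝ => (⌊lam * y⌋ : ℝ) with hf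
  have h0 : lam < 0 := by linarith
  have up : ∀ (k : ℕ) (z : ℝ), z ≤ -((k : ℝ) + 2) → (k : ℝ) + 2 ≤ f z := by
    intro k z hz
    have h1 : (((k : ℤ) + 2 : ℤ) : ℝ) ≤ lam * z := by
      push_cast
      have : (0 : ℝ) ≤ k := k.cast_nonneg
      nlinarith
    have h2 := Int.le_floor.mpr h1
    have h3 : (((k : ℤ) + 2 : ℤ) : ℝ) ≤ (⌊lam * z⌋ : ℝ) := by exact_mod_cast h2
    push_cast at h3
    exact h3
  have down : ∀ (k : ℕ) (y : ℝ), (k : ℝ) + 1 ≤ y → f y ≤ -((k : ℝ) + 2) := by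
    intro k y hy
    have h1 : lam * y < ((-((k : ℤ) + 1) : ℤ) : ℝ) := by
      push_cast
      have : (0 : ℝ) ≤ k := k.cast_nonneg
      nlinarith
    have h2 := Int.floor_lt.mpr h1
    have h4 : ⌊lam * y⌋ ≤ -((k : ℤ) + 2) := by omega
    have h3 : (⌊lam * y⌋ : ℝ) ≤ ((-((k : ℤ) + 2) : ℤ) : ℝ) := by exact_mod_cast h4
    push_cast at h3
    simp only [hf]
    linarith
  have odd : ∀ k : ℕ, (k : ℝ) + 1 ≤ f^[2 * k + 1] x := by
    intro k
    induction k with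
    | zero =>
      have h1 : ((1 : ℤ) : ℝ) ≤ lam * x := by
        have := (le_div_iff_of_neg h0).mp hx
        push_cast
        linarith
      have h2 := Int.le_floor.mpr h1
      have h3 : (1 : ℝ) ≤ (⌊lam * x⌋ : ℝ) := by exact_mod_cast h2
      simpa [hf] using h3
    | succ k ih =>
      have h := up k _ (down k _ ih)
      rw [← Function.iterate_succ_apply' f, ← Function.iterate_succ_apply' f] at h
      have e : 2 * (k + 1) + 1 = (2 * k + 1).succ.succ := by omega
      rw [e]
      push_cast
      linarith
  have even : ∀ k : ℕ, f^[2 * k] x ≤ -(k : ℝ) := by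
    intro k
    cases k with
    | zero =>
      have : 1 / lam < 0 := one_div_neg.mpr h0
      simp
      linarith
    | succ k =>
      have h := down k _ (odd k)
      rw [← Function.iterate_succ_apply' f] at h
      have e : 2 * (k + 1) = (2 * k + 1).succ := by omega
      rw [e]
      push_cast
      linarith
  constructor
  · exact tendsto_atBot_mono even (tendsto_neg_atTop_atBot.comp tendsto_natCast_atTop_atTop)
  · refine tendsto_atTop_mono (fun k => ?_) (tendsto_natCast_atTop_atTop (R := ℝ))
    linarith [odd k]
end

section
/- Let m ∈ ℕ, m ≥ 1, and let λ ∈ ℝ satisfy (m−1)/m < λ ≤ m/(m+1). Let k be an integer with −m ≤ k ≤ −1, and let x ∈ ℝ with k/λ ≤ x < (k+1)/λ. Then f_λ(x) = k and f_λⁿ(x) = k for all n ≥ 1; in particular f_λⁿ(x) → k as n → ∞. -/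
open Filter

/-- For (m-1)/m < λ ≤ m/(m+1), k an integer with -m ≤ k ≤ -1, and k/λ ≤ x < (k+1)/λ,
one has f_λ(x) = k, all iterates equal k, so the orbit converges to k. -/
theorem floor_lambda_lt_one_basin_of_neg_fixed_point (m : ℕ) (hm : 1 ≤ m) (lam : ℝ)
    (h1 : ((m : ℝ) - 1) / m < lam) (h2 : lam ≤ (m : ℝ) / (m + 1))
    (k : ℤ) (hk1 : -(m : ℤ) ≤ k) (hk2 : k ≤ -1)
    (x : ℝ) (hx1 : (k : ℝ) / lam ≤ x) (hx2 : x < ((k : ℝ) + 1) / lam) :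
    ⌊lam * x⌋ = k ∧
    (∀ n : ℕ, 1 ≤ n → (fun y : ℝ => (⌊lam * y⌋ : ℝ))^[n] x = (k : ℝ)) ∧
    Tendsto (fun n : ℕ => (fun y : ℝ => (⌊lam * y⌋ : ℝ))^[n] x) atTop (nhds (k : ℝ)) := by
  have hmR : (1 : ℝ) ≤ m := by exact_mod_cast hm
  have hm0 : (0 : ℝ) < m := by linarith
  have hpos : 0 < lam := lt_of_le_of_lt (div_nonneg (by linarith) hm0.le) h1
  have h1' : (m : ℝ) - 1 < lam * m := (div_lt_iff₀ hm0).1 h1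
  have hlt : lam < 1 := lt_of_le_of_lt h2 ((div_lt_one (by linarith)).2 (by linarith))
  have hk1R : -(m : ℝ) ≤ k := by exact_mod_cast hk1
  have hk2R : (k : ℝ) ≤ -1 := by exact_mod_cast hk2
  have hx : ⌊lam * x⌋ = k := by
    rw [Int.floor_eq_iff]
    rw [div_le_iff₀ hpos] at hx1
    rw [lt_div_iff₀ hpos] at hx2
    constructor <;> linarith
  have hfix : ⌊lam * (k : ℝ)⌋ = k := by
    rw [Int.floor_eq_iff]
    constructor
    · nlinarith
    · nlinarith [mul_nonneg (sub_nonneg.2 hlt.le) (neg_le_iff_add_nonneg.1 hk1R)]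
  have hit : ∀ n : ℕ, 1 ≤ n → (fun y : ℝ => (⌊lam * y⌋ : ℝ))^[n] x = (k : ℝ) := by
    intro n hn
    induction n, hn using Nat.le_induction with
    | base => simp [hx]
    | succ n hn ih =>
      rw [Function.iterate_succ_apply', ih]
      simp only [hfix]
  refine ⟨hx, hit, ?_⟩
  apply tendsto_const_nhds.congr'
  filter_upwards [eventually_ge_atTop 1] with n hn
  exact (hit n hn).symm
end

section
/- Let m ∈ ℕ, m ≥ 1, and let λ ∈ ℝ satisfy (m−1)/m < λ ≤ m/(m+1). Then for every x ∈ ℝ with x < −m/λ, the iterates f_λⁿ(x) form an increasing sequence bounded above by −m, and f_λⁿ(x) → −m as n → ∞. -/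
open Filter

/-- For (m-1)/m < λ ≤ m/(m+1) and x < -m/λ, the iterates of f_λ(x) = ⌊λx⌋ form an
increasing sequence bounded above by -m, converging to -m. -/
theorem floor_lambda_lt_one_orbit_tendsto_neg_m (m : ℕ) (hm : 1 ≤ m) (lam : ℝ)
    (h1 : ((m : ℝ) - 1) / m < lam) (h2 : lam ≤ (m : ℝ) / (m + 1))
    (x : ℝ) (hx : x < -(m : ℝ) / lam) :
    Monotone (fun n : ℕ => (fun y : ℝ => (⌊lam * y⌋ : ℝ))^[n] x) ∧
    (∀ n : ℕ, (fun y : ℝ => (⌊lam * y⌋ : ℝ))^[n] x ≤ -(m : ℝ)) ∧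
    Tendsto (fun n : ℕ => (fun y : ℝ => (⌊lam * y⌋ : ℝ))^[n] x) atTop (nhds (-(m : ℝ))) := by
  have hm' : (1 : ℝ) ≤ m := by exact_mod_cast hm
  have hlam : 0 < lam := lt_of_le_of_lt (div_nonneg (by linarith) (by linarith)) h1
  rw [div_lt_iff₀ (by linarith)] at h1
  rw [le_div_iff₀ (by linarith)] at h2
  rw [lt_div_iff₀ hlam] at hx
  have hx1 : x < -((m : ℝ) + 1) := by
    by_contra h
    push Not at h
    nlinarith
  have key : ∀ y : ℝ, y ≤ -(m : ℝ) → ⌊lam * y⌋ ≤ -(m : ℤ) := by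
    intro y hy
    have : ⌊lam * y⌋ < -(m : ℤ) + 1 := by
      rw [Int.floor_lt]
      push_cast
      nlinarith
    omega
  have inc : ∀ y : ℝ, y ≤ -((m : ℝ) + 1) → y < (⌊lam * y⌋ : ℝ) := by
    intro y hy
    have := Int.lt_floor_add_one (lam * y)
    nlinarith
  have fixm : ⌊lam * (-(m : ℝ))⌋ = -(m : ℤ) := by
    rw [Int.floor_eq_iff]
    push_cast
    constructor <;> nlinarith
  set f : ℝ → ℝ := fun y : ℝ => (⌊lam * y⌋ : ℝ) with hf
  have bd : ∀ n : ℕ, f^[n] x ≤ -(m : ℝ) := by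
    intro n
    induction n with
    | zero => simp only [Function.iterate_zero, id]; linarith
    | succ n ih =>
      rw [Function.iterate_succ_apply']
      have := key _ ih
      simp only [hf]
      exact_mod_cast this
  have step : ∀ z : ℤ, z ≤ -(m : ℤ) → z = -(m : ℤ) ∨ z + 1 ≤ ⌊lam * (z : ℝ)⌋ := by
    intro z hz
    by_cases h : z = -(m : ℤ)
    · exact Or.inl h
    · right
      have h' : z ≤ -((m : ℤ) + 1) := by omega
      have := inc z (by exact_mod_cast h')
      have : z < ⌊lam * (z : ℝ)⌋ := by exact_mod_cast this
      omega
  have prog : ∀ n : ℕ, ∃ z : ℤ, f^[n + 1] x = z ∧ z ≤ -(m : ℤ) ∧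
      (z = -(m : ℤ) ∨ ⌊lam * x⌋ + n ≤ z) := by
    intro n
    induction n with
    | zero => exact ⟨⌊lam * x⌋, by simp [hf], key x (by linarith), by simp⟩
    | succ n ih =>
      obtain ⟨z, hz, hle, hor⟩ := ih
      refine ⟨⌊lam * (z : ℝ)⌋, ?_, key _ (by exact_mod_cast hle), ?_⟩
      · rw [Function.iterate_succ_apply', hz]
      · rcases step z hle with h | h
        · left
          rw [h]
          push_cast
          exact fixm
        · rcases hor with h' | h'
          · left
            rw [h']
            push_cast
            exact fixm
          · right
            push_cast
            omega
  refine ⟨?_, bd, ?_⟩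
  · apply monotone_nat_of_le_succ
    intro n
    rw [Function.iterate_succ_apply']
    cases n with
    | zero => exact (inc x hx1.le).le
    | succ n =>
      obtain ⟨z, hz, hle, -⟩ := prog n
      rw [hz]
      simp only [hf]
      rcases step z hle with h | h
      · rw [h]
        push_cast
        rw [fixm]
        push_cast
        exact le_rfl
      · exact_mod_cast (by omega : z ≤ ⌊lam * (z : ℝ)⌋)
  · apply tendsto_const_nhds.congr'
    filter_upwards [eventually_ge_atTop ((-(m : ℤ) - ⌊lam * x⌋).toNat + 1)] with n hn
    obtain ⟨k, rfl⟩ : ∃ k, n = k + 1 := ⟨n - 1, by omega⟩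
    obtain ⟨z, hz, hle, hor⟩ := prog k
    have : z = -(m : ℤ) := by omega
    rw [hz, this]
    push_cast
    rfl
end

section
/- Let m ∈ ℕ, m ≥ 1, and let λ ∈ ℝ satisfy (m+1)/m ≤ λ and λ·(m−1) < m (the latter condition being automatic when m = 1 and equivalent to λ < m/(m−1) when m ≥ 2). Let k be an integer with 0 ≤ k ≤ m−1 and let x ∈ ℝ with k/λ ≤ x < (k+1)/λ. Then f_λ(x) = k and f_λⁿ(x) = k for all n ≥ 1; in particular f_λⁿ(x) → k as n → ∞. -/
open Filter

/-- For (m+1)/m ≤ λ with λ(m-1) < m, k an integer with 0 ≤ k ≤ m-1, and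
k/λ ≤ x < (k+1)/λ, one has f_λ(x) = k, all iterates equal k, so the orbit
converges to k. -/
theorem floor_lambda_gt_one_basin_of_fixed_point (m : ℕ) (hm : 1 ≤ m) (lam : ℝ)
    (h1 : ((m : ℝ) + 1) / m ≤ lam) (h2 : lam * ((m : ℝ) - 1) < m)
    (k : ℤ) (hk1 : 0 ≤ k) (hk2 : k ≤ (m : ℤ) - 1)
    (x : ℝ) (hx1 : (k : ℝ) / lam ≤ x) (hx2 : x < ((k : ℝ) + 1) / lam) :
    ⌊lam * x⌋ = k ∧
    (∀ n : ℕ, 1 ≤ n → (fun y : ℝ => (⌊lam * y⌋ : ℝ))^[n] x = (k : ℝ)) ∧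
    Tendsto (fun n : ℕ => (fun y : ℝ => (⌊lam * y⌋ : ℝ))^[n] x) atTop (nhds (k : ℝ)) := by
  have hm0 : (0 : ℝ) < m := by exact_mod_cast hm
  have hl : 1 < lam := by
    refine lt_of_lt_of_le ?_ h1
    rw [lt_div_iff₀ hm0]
    linarith
  have hl0 : 0 < lam := by linarith
  have hk1r : (0 : ℝ) ≤ k := by exact_mod_cast hk1
  have hk2r : (k : ℝ) ≤ (m : ℝ) - 1 := by exact_mod_cast hk2
  have hx : ⌊lam * x⌋ = k := by
    rw [div_le_iff₀ hl0] at hx1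
    rw [lt_div_iff₀ hl0] at hx2
    rw [Int.floor_eq_iff]
    constructor <;> linarith [mul_comm lam x]
  have hfix : ⌊lam * (k : ℝ)⌋ = k := by
    rw [Int.floor_eq_iff]
    have h3 := mul_le_mul_of_nonneg_left hk2r (sub_nonneg.2 hl.le)
    constructor <;> nlinarith
  have hit : ∀ n : ℕ, 1 ≤ n → (fun y : ℝ => (⌊lam * y⌋ : ℝ))^[n] x = (k : ℝ) := by
    intro n hn
    induction n, hn using Nat.le_induction with
    | base => simp [hx]
    | succ n hn ih =>
      rw [Function.iterate_succ_apply', ih]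
      simp only [hfix]
  refine ⟨hx, hit, ?_⟩
  refine tendsto_const_nhds.congr' ?_
  filter_upwards [eventually_ge_atTop 1] with n hn
  exact (hit n hn).symm
end

section
/- Let m ∈ ℕ, m ≥ 1, and let λ ∈ ℝ satisfy (m+1)/m ≤ λ and λ·(m−1) < m (the latter condition being automatic when m = 1 and equivalent to λ < m/(m−1) when m ≥ 2). Then for every x ∈ ℝ with x ≥ m/λ, the iterates diverge: f_λⁿ(x) → +∞ as n → ∞. -/
open Filter

/-- For (m+1)/m ≤ λ with λ(m-1) < m, and x ≥ m/λ, the iterates of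
f_λ(x) = ⌊λx⌋ tend to +∞. -/
theorem floor_lambda_gt_one_orbit_tendsto_top (m : ℕ) (hm : 1 ≤ m) (lam : ℝ)
    (h1 : ((m : ℝ) + 1) / m ≤ lam) (h2 : lam * ((m : ℝ) - 1) < m)
    (x : ℝ) (hx : (m : ℝ) / lam ≤ x) :
    Tendsto (fun n : ℕ => (fun y : ℝ => (⌊lam * y⌋ : ℝ))^[n] x) atTop atTop := by
  have hm0 : (1 : ℝ) ≤ m := by exact_mod_cast hm
  have hmpos : (0 : ℝ) < m := by linarith
  have h1' : (m : ℝ) + 1 ≤ lam * m := by rwa [div_le_iff₀ hmpos] at h1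
  have hl : 0 < lam := lt_of_lt_of_le (by positivity) h1
  have hl1 : 1 ≤ lam := by
    by_contra h
    push Not at h
    nlinarith
  have key : ∀ n : ℕ, ((m : ℝ) + n) ≤ (fun y : ℝ => (⌊lam * y⌋ : ℝ))^[n + 1] x := by
    intro n
    induction n with
    | zero =>
      have h : (m : ℝ) ≤ lam * x := by
        rw [div_le_iff₀ hl] at hx
        linarith
      have h' : (m : ℤ) ≤ ⌊lam * x⌋ := Int.le_floor.mpr (by exact_mod_cast h)
      have h'' : (m : ℝ) ≤ (⌊lam * x⌋ : ℝ) := by exact_mod_cast h'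
      simpa using h''
    | succ n ih =>
      rw [Function.iterate_succ_apply']
      generalize (fun y : ℝ => (⌊lam * y⌋ : ℝ))^[n + 1] x = y at ih ⊢
      have hn : (0 : ℝ) ≤ n := Nat.cast_nonneg n
      have h : (m : ℝ) + n + 1 ≤ lam * y := by
        nlinarith [mul_nonneg (sub_nonneg.mpr hl1) (by linarith : (0 : ℝ) ≤ y - m)]
      have h' : (m : ℤ) + n + 1 ≤ ⌊lam * y⌋ := Int.le_floor.mpr (by push_cast; exact h)
      have h'' : (m : ℝ) + n + 1 ≤ (⌊lam * y⌋ : ℝ) := by exact_mod_cast h'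
      push_cast
      linarith
  rw [← tendsto_add_atTop_iff_nat 1]
  exact tendsto_atTop_mono key (tendsto_atTop_add_const_left _ _ tendsto_natCast_atTop_atTop)
end
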